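/- Let m ≥ 3 be an integer. For every positive real number l < 4m − 4 there exists a positive integer t such that for every integer r ≥ 1, the number of reduced words W of length r over the alphabet {y_1^{±1},…,y_{2m}^{±1}} whose X-form →W is a t-aperiodic word is at least l^r. -/

import Mathlib

/-!
Only words in which neighbouring letters `y_i`, `y_j` come from different generators `x` are used.
Every letter then has exactly `4 m - 4` admissible neighbours, such words are reduced, and a word is
recovered from its `X`-form as the list of maximal constant blocks (`List.splitBy`).

*From powers in the `X`-form to powers in the word* (`tAperiodic_xForm`). Suppose `Y ^ (n + 1)`
occurs in the `X`-form, `n ≥ 2`. A constant `Y` is impossible, since no letter occurs three times in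
a row. Otherwise `Y = A B` with a block boundary between `A` and `B`, and
`Y ^ (n + 1) = A (B A) ^ n B`; here `(B A) ^ n` is cut out by block boundaries, so the word itself
contains an `n`-th power.

*Counting* (`goodWords_growth`). Let `a r` be the number of such words of length `r` without
`(N + 1)`-st powers. Of the at least `(4 m - 4) * a r` extensions of these words by one letter on
the left, a bad one has the form `V ^ (N + 1) u` and is determined by `|V| = p` together with the
power-free word `V u`, so there are at most `∑ p, a (r + 1 - N p)` of them. If `a` grows at least by
the factor `l` at each earlier step, this sum is at most `a r * l / (l ^ N - 1)`, and for large `N`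
the growth by the factor `l` persists.
-/


/-- A word over an alphabet of `k` generators and their inverses is modelled
as a list of pairs `(i, b)` where `i : Fin k` indexes the generator and
`b : Bool` records the sign. A word is reduced if it contains no subword
`x x⁻¹` or `x⁻¹ x`. -/
def ReducedWord {k : ℕ} (w : List (Fin k × Bool)) : Prop :=
  List.Chain' (fun a b => ¬(a.1 = b.1 ∧ a.2 ≠ b.2)) w

/-- A word is `t`-aperiodic if it contains no non-empty subword of the form
`Y^t` (that is, `t` consecutive copies of a non-empty word `Y`). -/
def TAperiodic {α : Type*} (t : ℕ) (w : List α) : Prop :=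
  ∀ Y : List α, Y ≠ [] → ¬ (List.flatten (List.replicate t Y) <:+: w)

/-- The `X`-form of a word over `{y₁^{±1},…,y_{2m}^{±1}}`: substitute
`y_{2j-1} ↦ x_j` and `y_{2j} ↦ x_j²` (with corresponding inverses).
Here the letter `y_{k+1}` (1-based) is modelled by the index `k : Fin (2*m)`
(0-based), so even 0-based indices correspond to odd subscripts. -/
def xForm {m : ℕ} (w : List (Fin (2 * m) × Bool)) : List (Fin m × Bool) :=
  List.flatten <| w.map fun a =>
    if a.1.val % 2 = 0 then
      [(⟨a.1.val / 2, by have := a.1.isLt; omega⟩, a.2)]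
    else
      [(⟨a.1.val / 2, by have := a.1.isLt; omega⟩, a.2),
       (⟨a.1.val / 2, by have := a.1.isLt; omega⟩, a.2)]

/-! ### Powers in the `X`-form -/

/-- The image `x` or `x²` of a single letter, with its sign, under the substitution of `xForm`. -/
def block {m : ℕ} (a : Fin (2 * m) × Bool) : List (Fin m × Bool) :=
  if a.1.val % 2 = 0 then
    [(⟨a.1.val / 2, by have := a.1.isLt; omega⟩, a.2)]
  else
    [(⟨a.1.val / 2, by have := a.1.isLt; omega⟩, a.2),
     (⟨a.1.val / 2, by have := a.1.isLt; omega⟩, a.2)]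

/-- Two letters `y` are admissible neighbours if they belong to different generators `x`. -/
def Adm {m : ℕ} (a b : Fin (2 * m) × Bool) : Prop := a.1.val / 2 ≠ b.1.val / 2

lemma xForm_cons {m : ℕ} (a : Fin (2 * m) × Bool) (w : List (Fin (2 * m) × Bool)) :
    xForm (a :: w) = block a ++ xForm w := rfl

lemma xForm_eq {m : ℕ} (w : List (Fin (2 * m) × Bool)) :
    xForm w = (w.map block).flatten := rfl

lemma block_injective {m : ℕ} : Function.Injective (block (m := m)) := by
  rintro ⟨⟨a, ha⟩, s⟩ ⟨⟨b, hb⟩, s'⟩ h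
  unfold block at h
  simp only at h
  split_ifs at h <;> simp at h <;> simp <;> refine ⟨by omega, by tauto⟩

lemma head_xForm {m : ℕ} {a : Fin (2 * m) × Bool} {w : List (Fin (2 * m) × Bool)}
    (h : (a :: w).IsChain Adm) : ∀ z ∈ (xForm w).head?, z.1.val ≠ a.1.val / 2 := by
  cases w with
  | nil => simp [xForm]
  | cons b w =>
    have h1 : Adm a b := (List.isChain_cons_cons.mp h).1
    rw [xForm_cons]
    unfold block
    unfold Adm at h1
    split_ifs <;> simp <;> omega

lemma no_cube_letter {m : ℕ} (w : List (Fin (2 * m) × Bool)) (h : w.IsChain Adm)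
    (c : Fin m × Bool) : ¬ [c, c, c] <:+: xForm w := by
  induction w with
  | nil => simp [xForm]
  | cons a w ih =>
    have ih := ih h.tail
    have hh := head_xForm h
    rw [xForm_cons]
    generalize xForm w = u at ih hh
    unfold block
    cases u <;> split_ifs <;>
      simp only [List.cons_append, List.nil_append, List.infix_cons_iff, List.cons_prefix_cons] <;>
      (try simp only [List.infix_cons_iff] at ih) <;> grind

lemma splitBy_xForm {m : ℕ} {w : List (Fin (2 * m) × Bool)} (h : w.IsChain Adm) :
    (xForm w).splitBy (fun a b => decide (a = b)) = w.map block := by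
  rw [xForm_eq]
  apply List.splitBy_flatten
  · simp only [List.mem_map, not_exists, not_and]
    intro a _
    unfold block
    split_ifs <;> simp
  · simp only [List.mem_map]
    rintro _ ⟨a, _, rfl⟩
    unfold block
    split_ifs <;> simp
  · rw [List.isChain_map]
    refine h.imp ?_
    intro a b hab
    unfold Adm at hab
    unfold block
    split_ifs <;> simp [hab]

lemma flatten_replicate_rotate {α : Type*} (A B : List α) (k : ℕ) :
    (List.replicate (k + 1) (A ++ B)).flatten =
      A ++ ((List.replicate k (B ++ A)).flatten ++ B) := by
  induction k with
  | zero => simp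
  | succ k ih =>
    rw [List.replicate_succ, List.flatten_cons, ih, List.replicate_succ, List.flatten_cons]
    simp

/-- Splitting into maximal constant blocks is compatible with powers of a word that starts with `b`
and ends with a different letter `a`. -/
lemma splitBy_power {α : Type*} [DecidableEq α] {a b : α} (hab : a ≠ b) (l₁ l₂ S : List α)
    (k : ℕ) :
    ((List.replicate k ((b :: l₂) ++ (l₁ ++ [a]))).flatten ++ (b :: S)).splitBy
        (fun x y => decide (x = y)) =
      (List.replicate k (((b :: l₂) ++ (l₁ ++ [a])).splitBy (fun x y => decide (x = y)))).flatten ++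
        (b :: S).splitBy (fun x y => decide (x = y)) := by
  induction k with
  | zero => simp
  | succ k ih =>
    rw [List.replicate_succ, List.flatten_cons, List.append_assoc, List.splitBy_append, ih,
      List.replicate_succ, List.flatten_cons, List.append_assoc]
    intro x hx y hy
    have hx' : x = a := by
      rw [← List.append_assoc, List.getLast?_concat] at hx
      simpa using hx.symm
    have hy' : y = b := by
      cases k with
      | zero => simpa using hy.symm
      | succ k => simpa [List.replicate_succ] using hy.symm
    simp [hx', hy', hab]

/-- An `(n + 1)`-st power in the `X`-form forces an `n`-th power in the word itself. -/
lemma tAperiodic_xForm {m n : ℕ} (hn : 2 ≤ n) {w : List (Fin (2 * m) × Bool)}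
    (h : w.IsChain Adm) (hw : TAperiodic n w) : TAperiodic (n + 1) (xForm w) := by
  intro Y hY hinf
  by_cases hc : Y.IsChain (· = ·)
  · -- A constant `Y` would give three equal consecutive letters.
    obtain ⟨c, Y', rfl⟩ := List.exists_cons_of_ne_nil hY
    rw [List.isChain_cons_eq_iff_eq_replicate] at hc
    rw [hc, ← List.replicate_succ, List.flatten_replicate_replicate] at hinf
    refine no_cube_letter w h c (List.IsInfix.trans ?_ hinf)
    obtain ⟨k, hk⟩ : ∃ k, (n + 1) * (Y'.length + 1) = 3 + k := Nat.exists_eq_add_of_le (by nlinarith)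
    refine ⟨[], List.replicate k c, ?_⟩
    rw [hk, List.replicate_add]
    rfl
  · rw [List.isChain_iff_forall_rel_of_append_cons_cons] at hc
    push Not at hc
    obtain ⟨a, b, l₁, l₂, rfl, hab⟩ := hc
    obtain ⟨P, S, hPS⟩ := hinf
    have e1 : l₁ ++ a :: b :: l₂ = (l₁ ++ [a]) ++ (b :: l₂) := by simp
    rw [e1, flatten_replicate_rotate] at hPS
    have e2 : xForm w = (P ++ (l₁ ++ [a])) ++
        ((List.replicate n ((b :: l₂) ++ (l₁ ++ [a]))).flatten ++ (b :: (l₂ ++ S))) := by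
      rw [← hPS]; simp
    have e3 := splitBy_xForm h
    rw [e2, List.splitBy_append, splitBy_power hab] at e3
    · set V := ((b :: l₂) ++ (l₁ ++ [a])).splitBy (fun x y => decide (x = y)) with hV
      have hV0 : V ≠ [] := by rw [hV, List.splitBy_ne_nil]; simp
      -- Applying a left inverse of `block` turns the power of `V` into a power inside `w`.
      have : Nonempty (Fin (2 * m) × Bool) := by
        cases w with
        | nil => simp [xForm] at e2
        | cons x _ => exact ⟨x⟩
      have hinv := Function.leftInverse_invFun (block_injective (m := m))
      have e4 := congrArg (List.map (Function.invFun block)) e3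
      rw [List.map_map, hinv.comp_eq_id, List.map_id] at e4
      refine hw (V.map (Function.invFun block)) (by simpa using hV0) ?_
      rw [← e4]
      rw [List.map_append, List.map_append, List.map_flatten, List.map_replicate,
        ← List.append_assoc]
      exact ⟨_, _, rfl⟩
    · intro x hx y hy
      have hx' : x = a := by
        rw [← List.append_assoc] at hx
        simpa using hx.symm
      have hy' : y = b := by
        obtain ⟨n, rfl⟩ : ∃ k, n = k + 1 := ⟨n - 1, by omega⟩
        simpa [List.replicate_succ] using hy.symm
      simp [hx', hy', hab]

/-! ### Counting power-free words -/

/-- The words of length `r` over `α` whose neighbouring letters are related by `R` and which contain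
no `n`-th power. -/
noncomputable def goodWords {α : Type*} [Finite α] (R : α → α → Prop) (n r : ℕ) :
    Finset (List α) :=
  ((List.finite_length_eq α r).subset (t := {w | w.length = r ∧ w.IsChain R ∧ TAperiodic n w})
    (fun _ h => h.1)).toFinset

lemma mem_goodWords {α : Type*} [Finite α] {R : α → α → Prop} {n r : ℕ} {w : List α} :
    w ∈ goodWords R n r ↔ w.length = r ∧ w.IsChain R ∧ TAperiodic n w := by
  simp [goodWords]

lemma TAperiodic.mono {α : Type*} {n : ℕ} {v w : List α} (h : TAperiodic n w) (hv : v <:+: w) :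
    TAperiodic n v := fun Y hY hi => h Y hY (hi.trans hv)

/-- The words of length `r + 1` with neighbouring letters related by `R` and tail in
`goodWords R (N + 1) r` that begin with an `(N + 1)`-st power of a word of length `p`. -/
noncomputable def badWords {α : Type*} [Finite α] (R : α → α → Prop) (N r p : ℕ) :
    Finset (List α) :=
  ((List.finite_length_eq α (r + 1)).subset
    (t := {z : List α | z.length = r + 1 ∧ z.IsChain R ∧ z.tail ∈ goodWords R (N + 1) r ∧
      ∃ V : List α, V.length = p ∧ (List.replicate (N + 1) V).flatten <+: z})
    (fun _ h => h.1)).toFinset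

lemma mem_badWords {α : Type*} [Finite α] {R : α → α → Prop} {N r p : ℕ} {z : List α} :
    z ∈ badWords R N r p ↔ z.length = r + 1 ∧ z.IsChain R ∧ z.tail ∈ goodWords R (N + 1) r ∧
      ∃ V : List α, V.length = p ∧ (List.replicate (N + 1) V).flatten <+: z := by
  simp [badWords]

lemma flatten_replicate_succ_append {α : Type*} (V u : List α) (N : ℕ) :
    (List.replicate (N + 1) V).flatten ++ u = (List.replicate N V).flatten ++ (V ++ u) := by
  rw [List.replicate_succ']; simp

/-- Removing the first `N` of the `N + 1` periods maps the bad words of period `p` injectively to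
shorter good words. -/
lemma card_badWords_le {α : Type*} [Finite α] {R : α → α → Prop} {N r p : ℕ} (hN : 1 ≤ N)
    (hp : 1 ≤ p) : (badWords R N r p).card ≤ (goodWords R (N + 1) (r + 1 - N * p)).card := by
  refine Finset.card_le_card_of_injOn (fun z => z.drop (N * p)) ?_ ?_
  · intro z hz
    obtain ⟨hlen, hch, htail, V, hV, u, rfl⟩ := mem_badWords.mp hz
    rw [flatten_replicate_succ_append] at *
    have hd : ((List.replicate N V).flatten ++ (V ++ u)).drop (N * p) = V ++ u := by
      apply List.drop_left'
      simp [hV]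
    have hsuf : V ++ u <:+ ((List.replicate N V).flatten ++ (V ++ u)).tail := by
      rw [List.tail_append_of_ne_nil]
      · exact List.suffix_append _ _
      · apply List.ne_nil_of_length_pos
        simp only [List.length_flatten, List.map_replicate, List.sum_replicate, hV, smul_eq_mul]
        positivity
    simp only [Finset.mem_coe]
    rw [mem_goodWords] at htail ⊢
    refine ⟨?_, ?_, ?_⟩
    · rw [List.length_drop, hlen]
    · rw [hd]; exact htail.2.1.suffix hsuf
    · rw [hd]; exact htail.2.2.mono hsuf.isInfix
  · intro z hz z' hz' h
    obtain ⟨-, -, -, V, hV, u, rfl⟩ := mem_badWords.mp hz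
    obtain ⟨-, -, -, V', hV', u', rfl⟩ := mem_badWords.mp hz'
    simp only [flatten_replicate_succ_append] at h ⊢
    rw [List.drop_left' (by simp [hV]), List.drop_left' (by simp [hV'])] at h
    obtain ⟨rfl, rfl⟩ := List.append_inj h (hV.trans hV'.symm)
    rfl

/-- If every letter has at least `d` admissible left neighbours, the good words of length `r` have
at least `d` times as many extensions, each of which is good or bad. -/
lemma extension_count {α : Type*} [Fintype α] {R : α → α → Prop} [DecidableRel R] {d : ℕ}
    (hd : ∀ a, d ≤ (Finset.univ.filter fun x => R x a).card) (hd0 : d ≤ Fintype.card α)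
    (N r : ℕ) :
    d * (goodWords R (N + 1) r).card ≤ (goodWords R (N + 1) (r + 1)).card +
      ∑ p ∈ Finset.Icc 1 (r + 1), (badWords R N r p).card := by
  classical
  let E := (goodWords R (N + 1) r).sigma
    (fun w => Finset.univ.filter fun x : α => (x :: w).IsChain R)
  have h1 : d * (goodWords R (N + 1) r).card ≤ E.card := by
    rw [Finset.card_sigma, mul_comm, ← smul_eq_mul]
    refine Finset.card_nsmul_le_sum _ _ _ ?_
    intro w hw
    have hch := (mem_goodWords.mp hw).2.1
    cases w with
    | nil => simpa using hd0
    | cons a w =>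
      refine (hd a).trans (Finset.card_le_card ?_)
      intro x hx
      simp only [Finset.mem_filter, Finset.mem_univ, true_and] at hx ⊢
      exact List.isChain_cons_cons.mpr ⟨hx, hch⟩
  refine h1.trans ?_
  have h2 : E.card ≤ (goodWords R (N + 1) (r + 1) ∪
      (Finset.Icc 1 (r + 1)).biUnion (badWords R N r)).card := by
    refine Finset.card_le_card_of_injOn (fun e => e.2 :: e.1) ?_ ?_
    · rintro ⟨w, x⟩ he
      simp only [E, Finset.coe_sigma, Set.mem_sigma_iff, Finset.mem_coe, Finset.mem_filter,
        Finset.mem_univ, true_and] at he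
      obtain ⟨hw, hch⟩ := he
      have hw' := mem_goodWords.mp hw
      simp only [Finset.mem_coe, Finset.mem_union]
      by_cases hap : TAperiodic (N + 1) (x :: w)
      · left
        exact mem_goodWords.mpr ⟨by simp [hw'.1], hch, hap⟩
      · right
        unfold TAperiodic at hap
        push Not at hap
        obtain ⟨V, hV0, hV⟩ := hap
        rw [List.infix_cons_iff] at hV
        have hV := hV.resolve_right (hw'.2.2 V hV0)
        rw [Finset.mem_biUnion]
        refine ⟨V.length, ?_, mem_badWords.mpr ⟨by simp [hw'.1], hch, by simpa using hw, V, rfl, hV⟩⟩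
        have h3 := hV.length_le
        have h4 := List.length_pos_iff.mpr hV0
        simp only [List.length_flatten, List.map_replicate, List.sum_replicate, smul_eq_mul,
          List.length_cons, hw'.1] at h3
        rw [Finset.mem_Icc]
        constructor <;> nlinarith
    · rintro ⟨w, x⟩ _ ⟨w', x'⟩ _ h
      simp only [List.cons.injEq] at h
      obtain ⟨rfl, rfl⟩ := h
      rfl
  refine h2.trans ((Finset.card_union_le _ _).trans ?_)
  gcongr
  exact Finset.card_biUnion_le

lemma badWords_eq_empty {α : Type*} [Finite α] {R : α → α → Prop} {N r p : ℕ}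
    (h : r + 1 < (N + 1) * p) : badWords R N r p = ∅ := by
  rw [Finset.eq_empty_iff_forall_notMem]
  intro z hz
  obtain ⟨hlen, -, -, V, hV, hpre⟩ := mem_badWords.mp hz
  have := hpre.length_le
  simp only [List.length_flatten, List.map_replicate, List.sum_replicate, smul_eq_mul, hV] at this
  omega

/-- The tail bound `∑ K⁻ᵖ ≤ 1 / (K - 1)` for the geometric series, over `1 ≤ p ≤ n`. -/
lemma sum_inv_pow_le {K : ℝ} (hK : 1 < K) (n : ℕ) :
    ∑ p ∈ Finset.Icc 1 n, (K ^ p)⁻¹ ≤ 1 / (K - 1) := by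
  have hK1 : 0 < K - 1 := by linarith
  have : ∑ p ∈ Finset.Icc 1 n, (K ^ p)⁻¹ = (1 - (K ^ n)⁻¹) / (K - 1) := by
    induction n with
    | zero => simp
    | succ n ih =>
      rw [Finset.sum_Icc_succ_top (by omega), ih]
      have : K ≠ 0 := by linarith
      field_simp
      ring
  rw [this]
  have h2 : 0 ≤ (K ^ n)⁻¹ := by positivity
  gcongr
  linarith

/-- The number of good words grows at least by the factor `l` at each step as soon as the loss
`l / (l ^ N - 1)` caused by bad extensions is at most `d - l`. -/
lemma goodWords_growth {α : Type*} [Fintype α] {R : α → α → Prop} [DecidableRel R] {d : ℕ}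
    (hd : ∀ a, d ≤ (Finset.univ.filter fun x => R x a).card) (hd0 : d ≤ Fintype.card α)
    {l : ℝ} (hl : 1 < l) {N : ℕ} (hN : 1 ≤ N) (hlN : l * (1 / (l ^ N - 1)) ≤ d - l) (r : ℕ) :
    l * (goodWords R (N + 1) r).card ≤ (goodWords R (N + 1) (r + 1)).card := by
  induction r using Nat.strong_induction_on with
  | _ r ih =>
  set a : ℕ → ℝ := fun r => ((goodWords R (N + 1) r).card : ℝ) with ha
  have hl0 : 0 < l := by linarith
  have hpow : ∀ j s, s + j ≤ r → l ^ j * a s ≤ a (s + j) := by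
    intro j
    induction j with
    | zero => intro s _; simp
    | succ j ihj =>
      intro s hs
      have h1 := ihj s (by omega)
      have h2 := ih (s + j) (by omega)
      calc l ^ (j + 1) * a s = l * (l ^ j * a s) := by ring
        _ ≤ l * a (s + j) := by gcongr
        _ ≤ a (s + (j + 1)) := h2
  have hK : 1 < l ^ N := one_lt_pow₀ hl (by omega)
  have hbad : ∀ p ∈ Finset.Icc 1 (r + 1),
      ((badWords R N r p).card : ℝ) ≤ a r * l * ((l ^ N) ^ p)⁻¹ := by
    intro p hp
    rw [Finset.mem_Icc] at hp
    have hNp : 1 ≤ N * p := Nat.mul_pos hN hp.1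
    by_cases hlen : N * p ≤ r + 1
    · have h1 : ((badWords R N r p).card : ℝ) ≤ a (r + 1 - N * p) := by
        exact Nat.cast_le.mpr (card_badWords_le hN hp.1)
      have h2 := hpow (N * p - 1) (r + 1 - N * p) (by omega)
      rw [show r + 1 - N * p + (N * p - 1) = r by omega] at h2
      rw [← pow_mul, ← div_eq_mul_inv, le_div_iff₀ (by positivity)]
      calc ((badWords R N r p).card : ℝ) * l ^ (N * p)
          ≤ a (r + 1 - N * p) * l ^ (N * p) := by gcongr
        _ = l ^ (N * p - 1) * a (r + 1 - N * p) * l := by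
            conv_lhs => rw [show N * p = (N * p - 1) + 1 by omega, pow_succ]
            simp only [Nat.sub_add_cancel hNp]
            ring
        _ ≤ a r * l := by gcongr
    · rw [badWords_eq_empty (by nlinarith)]
      simp only [Finset.card_empty, Nat.cast_zero]
      positivity
  have hext : (d : ℝ) * a r ≤ a (r + 1) + ∑ p ∈ Finset.Icc 1 (r + 1),
      ((badWords R N r p).card : ℝ) := by
    have := extension_count hd hd0 N r
    simp only [ha]
    exact_mod_cast this
  have hsum : ∑ p ∈ Finset.Icc 1 (r + 1), ((badWords R N r p).card : ℝ) ≤ a r * (d - l) := by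
    calc _ ≤ ∑ p ∈ Finset.Icc 1 (r + 1), a r * l * ((l ^ N) ^ p)⁻¹ := Finset.sum_le_sum hbad
      _ = a r * l * ∑ p ∈ Finset.Icc 1 (r + 1), ((l ^ N) ^ p)⁻¹ := by rw [Finset.mul_sum]
      _ ≤ a r * l * (1 / (l ^ N - 1)) := by
          gcongr
          exact sum_inv_pow_le hK _
      _ = a r * (l * (1 / (l ^ N - 1))) := by ring
      _ ≤ a r * (d - l) := by gcongr
  change l * a r ≤ a (r + 1)
  linarith

lemma pow_le_card_goodWords {α : Type*} [Fintype α] {R : α → α → Prop} [DecidableRel R] {d : ℕ}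
    (hd : ∀ a, d ≤ (Finset.univ.filter fun x => R x a).card) (hd0 : d ≤ Fintype.card α)
    {l : ℝ} (hl : 1 < l) {N : ℕ} (hN : 1 ≤ N) (hlN : l * (1 / (l ^ N - 1)) ≤ d - l) (r : ℕ) :
    l ^ r ≤ (goodWords R (N + 1) r).card := by
  induction r with
  | zero =>
    have : ([] : List α) ∈ goodWords R (N + 1) 0 := by
      refine mem_goodWords.mpr ⟨rfl, by simp, ?_⟩
      intro Y hY h
      simp [hY] at h
    have := Finset.card_pos.mpr ⟨_, this⟩
    simp only [pow_zero]
    exact_mod_cast this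
  | succ r ih =>
    calc l ^ (r + 1) = l * l ^ r := by ring
      _ ≤ l * (goodWords R (N + 1) r).card := by gcongr
      _ ≤ _ := goodWords_growth hd hd0 hl hN hlN r

/-! ### Admissible neighbours of a letter -/

instance {m : ℕ} : DecidableRel (Adm (m := m)) := fun a b => by unfold Adm; infer_instance

/-- At most four letters share the generator `x` of a given letter: two choices of `y` and two
signs. -/
lemma card_adm {m : ℕ} (a : Fin (2 * m) × Bool) :
    4 * m - 4 ≤ (Finset.univ.filter fun x => Adm x a).card := by
  have h1 := Finset.card_filter_add_card_filter_not (s := Finset.univ)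
    (fun x : Fin (2 * m) × Bool => Adm x a)
  have h2 : (Finset.univ.filter fun x => ¬ Adm x a).card ≤
      (Finset.range 2 ×ˢ (Finset.univ : Finset Bool)).card := by
    refine Finset.card_le_card_of_injOn (fun x => (x.1.val % 2, x.2)) ?_ ?_
    · intro x _
      simp only [Finset.coe_product, Set.mem_prod, Finset.coe_range, Set.mem_Iio, Finset.coe_univ,
        Set.mem_univ, and_true]
      omega
    · rintro ⟨⟨x, hx⟩, s⟩ h ⟨⟨y, hy⟩, s'⟩ h' e
      simp [Adm] at h h' e ⊢
      exact ⟨by omega, e.2⟩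
  simp at h1 h2
  omega

theorem statement7 (m : ℕ) (hm : 3 ≤ m) (l : ℝ) (hl0 : 0 < l)
    (hl : l < 4 * m - 4) :
    ∃ t : ℕ, 0 < t ∧ ∀ r : ℕ, 1 ≤ r →
      l ^ r ≤ (Nat.card {w : List (Fin (2 * m) × Bool) //
        w.length = r ∧ ReducedWord w ∧ TAperiodic t (xForm w)} : ℝ) := by
  -- Growth rates below `2` are covered by the rate `2`.
  set L : ℝ := max l 2 with hL
  have hm' : (3 : ℝ) ≤ m := by exact_mod_cast hm
  have hL1 : 1 < L := lt_of_lt_of_le (by norm_num) (le_max_right l 2)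
  have hLd : L < 4 * m - 4 := max_lt hl (by linarith)
  have hd : ((4 * m - 4 : ℕ) : ℝ) = 4 * m - 4 := by
    rw [Nat.cast_sub (by omega)]; push_cast; ring
  obtain ⟨N, hN⟩ := pow_unbounded_of_one_lt (L / (4 * m - 4 - L) + 1) hL1
  have hgap : 0 < 4 * (m : ℝ) - 4 - L := by linarith
  have hN1 : 1 ≤ N := by
    rcases Nat.eq_zero_or_pos N with rfl | h
    · have : 0 < L / (4 * m - 4 - L) := by positivity
      simp only [pow_zero] at hN
      linarith
    · exact h
  have hlN : L * (1 / (L ^ N - 1)) ≤ (4 * m - 4 : ℕ) - L := by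
    have h1 : L / (4 * m - 4 - L) < L ^ N - 1 := by linarith
    have h0 : 0 < L / (4 * m - 4 - L) := by positivity
    rw [hd, mul_one_div, div_le_iff₀ (by linarith)]
    rw [div_lt_iff₀ hgap] at h1
    linarith
  refine ⟨N + 2, by omega, fun r _ => ?_⟩
  have hcount := pow_le_card_goodWords (card_adm (m := m)) (by simp; omega) hL1 hN1 hlN r
  calc l ^ r ≤ L ^ r := by gcongr; exact le_max_left _ _
    _ ≤ _ := hcount
    _ ≤ _ := by
      have hfin : {w : List (Fin (2 * m) × Bool) |
          w.length = r ∧ ReducedWord w ∧ TAperiodic (N + 2) (xForm w)}.Finite :=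
        (List.finite_length_eq _ r).subset fun _ h => h.1
      rw [← Set.ncard_coe_finset]
      refine Nat.cast_le.mpr (Set.ncard_le_ncard (t := {w : List (Fin (2 * m) × Bool) |
          w.length = r ∧ ReducedWord w ∧ TAperiodic (N + 2) (xForm w)}) ?_ hfin)
      intro w hw
      obtain ⟨h1, h2, h3⟩ := mem_goodWords.mp (Finset.mem_coe.mp hw)
      refine ⟨h1, ?_, tAperiodic_xForm (by omega) h2 h3⟩
      refine List.IsChain.imp ?_ h2
      intro a b hab h
      exact hab (by rw [h.1])
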